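/- arXiv:1910.10709 — 2 statements merged into one kernel-verified Lean document; each statement's English description precedes it below -/
import Mathlib

section
/- Let B_1, B_2, …, B_{n−1} be n×n oscillatory matrices. Then the product B_1 B_2 ⋯ B_{n−1} is totally positive. -/
/-- A square real matrix is totally nonnegative if all its minors are nonnegative. -/
def TotallyNonneg {n : ℕ} (A : Matrix (Fin n) (Fin n) ℝ) : Prop :=
  ∀ (k : ℕ) (r c : Fin k → Fin n), StrictMono r → StrictMono c →
    0 ≤ (A.submatrix r c).det

/-- A square real matrix is totally positive if all its minors are positive. -/
def TotallyPos {n : ℕ} (A : Matrix (Fin n) (Fin n) ℝ) : Prop :=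
  ∀ (k : ℕ) (r c : Fin k → Fin n), StrictMono r → StrictMono c →
    0 < (A.submatrix r c).det

/-- A is oscillatory if it is totally nonnegative and some positive power is totally positive. -/
def Oscillatory {n : ℕ} (A : Matrix (Fin n) (Fin n) ℝ) : Prop :=
  TotallyNonneg A ∧ ∃ k : ℕ, 0 < k ∧ TotallyPos (A ^ k)

/-!
A nonsingular totally nonnegative matrix has a positive corner entry, and passing to the Schur
complement of that entry preserves both properties; reversing the order of all indices gives the
same at the opposite corner. Induction along Schur complements at a corner away from `i` and `j`
shows that deleting row `i` and column `j` keeps the matrix nonsingular whenever `|i - j| ≤ 1` and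
the `(j, i)` entry is positive. Such deletions reduce every quasi-principal minor (Gantmacher–Krein:
row and column indices differ by at most one and interlace) with positive diagonal entries to the
full determinant, so it is positive. In an oscillatory matrix the entries next to the diagonal are
positive, as otherwise all powers would share a zero block; hence all its quasi-principal minors
are positive.

Any increasing `k`-tuple of indices in `{0, …, n - 1}` can be moved to any other in `n - 1` steps,
each of them quasi-principal. By Cauchy–Binet, a minor of the product is at least the product of
the minors along this path.
-/

/-! ### The Cauchy–Binet formula -/

section CauchyBinet

variable {R ι : Type*} [CommRing R]

theorem det_mul_eq_sum_prod_mul_det_submatrix [Fintype ι] {m : Type*} [Fintype m] [DecidableEq m]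
    (A : Matrix m ι R) (B : Matrix ι m R) :
    (A * B).det = ∑ f : m → ι, (∏ i, A i (f i)) * (B.submatrix f id).det := by
  have rows : A * B = fun i => ∑ j, A i j • B j := by
    ext i l
    simp only [Matrix.mul_apply, Finset.sum_apply, Pi.smul_apply, smul_eq_mul]
  rw [rows]
  refine (Matrix.detRowAlternating.toMultilinearMap.map_sum fun i j => A i j • B j).trans ?_
  exact Finset.sum_congr rfl fun f _ =>
    Matrix.detRowAlternating.toMultilinearMap.map_smul_univ (fun i => A i (f i)) fun i => B (f i)

variable [LinearOrder ι] {k : ℕ}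

theorem exists_strictMono_comp_perm {f : Fin k → ι} (hf : Function.Injective f) :
    ∃ (s : Fin k → ι) (σ : Equiv.Perm (Fin k)), StrictMono s ∧ s ∘ σ = f :=
  ⟨f ∘ Tuple.sort f, (Tuple.sort f)⁻¹,
    (Tuple.monotone_sort f).strictMono_of_injective (hf.comp (Tuple.sort f).injective),
    by ext; simp⟩

theorem strictMono_comp_perm_inj {s s' : Fin k → ι} (hs : StrictMono s) (hs' : StrictMono s')
    {σ σ' : Equiv.Perm (Fin k)} (h : s ∘ σ = s' ∘ σ') : s = s' ∧ σ = σ' := by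
  obtain rfl : s = s' := (hs.range_inj hs').1 <| by
    simpa only [EquivLike.range_comp] using congrArg Set.range h
  exact ⟨rfl, Equiv.ext fun i => hs.injective (congrFun h i)⟩

open Classical in
theorem det_mul_eq_sum_strictMono [Fintype ι] (A : Matrix (Fin k) ι R) (B : Matrix ι (Fin k) R) :
    (A * B).det =
      ∑ s : Fin k → ι with StrictMono s, (A.submatrix id s).det * (B.submatrix s id).det := by
  have expand (s : Fin k → ι) : (A.submatrix id s).det * (B.submatrix s id).det =
      ∑ σ : Equiv.Perm (Fin k), (∏ i, A i (s (σ i))) * (B.submatrix (s ∘ σ) id).det := by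
    rw [← Matrix.det_transpose, Matrix.det_apply', Finset.sum_mul]
    refine Finset.sum_congr rfl fun σ _ => ?_
    have : B.submatrix (s ∘ σ) id = (B.submatrix s id).submatrix σ id := rfl
    rw [this, Matrix.det_permute]
    simp only [Matrix.transpose_apply, Matrix.submatrix_apply, id_eq]
    ring
  rw [det_mul_eq_sum_prod_mul_det_submatrix, Finset.sum_congr rfl fun s _ => expand s,
    ← Finset.sum_product']
  symm
  refine Finset.sum_of_injOn (fun x => x.1 ∘ x.2) ?_ (by simp) ?_ fun _ _ => rfl
  · rintro ⟨s, σ⟩ hs ⟨s', σ'⟩ hs' h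
    simp only [Finset.coe_product, Set.mem_prod, Finset.mem_coe, Finset.mem_filter] at hs hs'
    exact Prod.ext_iff.2 (strictMono_comp_perm_inj hs.1.2 hs'.1.2 h)
  · intro f _ hf
    have : ¬ Function.Injective f := fun hinj => by
      obtain ⟨s, σ, hs, rfl⟩ := exists_strictMono_comp_perm hinj
      exact hf ⟨(s, σ), by simpa using hs, rfl⟩
    obtain ⟨i, j, hij, hne⟩ := Function.not_injective_iff.1 this
    rw [Matrix.det_zero_of_row_eq hne (funext fun l => congrArg (B · l) hij), mul_zero]

open Classical in
theorem det_submatrix_mul [Fintype ι] {m m' : Type*} (A : Matrix m ι R) (B : Matrix ι m' R)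
    (r : Fin k → m) (c : Fin k → m') :
    ((A * B).submatrix r c).det =
      ∑ s : Fin k → ι with StrictMono s, (A.submatrix r s).det * (B.submatrix s c).det := by
  rw [Matrix.submatrix_mul A B r id c Function.bijective_id, det_mul_eq_sum_strictMono]
  rfl

end CauchyBinet

/-! ### The Schur complement of the corner entry -/

section SchurComplement

variable {K : Type*} [Field K] {m n : ℕ}

/-- The Schur complement of the `(0, 0)` entry: what remains of `A` after clearing column `0` by
row operations and removing row and column `0`. It is meaningful only when `A 0 0 ≠ 0`. -/
def cornerSchurCompl (A : Matrix (Fin (m + 1)) (Fin (n + 1)) K) : Matrix (Fin m) (Fin n) K :=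
  fun i j => A i.succ j.succ - A i.succ 0 * A 0 j.succ / A 0 0

theorem cornerSchurCompl_transpose (A : Matrix (Fin (m + 1)) (Fin (n + 1)) K) :
    cornerSchurCompl A.transpose = (cornerSchurCompl A).transpose := by
  ext i j
  simp only [cornerSchurCompl, Matrix.transpose_apply, mul_comm]

theorem det_eq_mul_det_cornerSchurCompl {A : Matrix (Fin (n + 1)) (Fin (n + 1)) K}
    (h : A 0 0 ≠ 0) : A.det = A 0 0 * (cornerSchurCompl A).det := by
  let coeff : Fin (n + 1) → K := Fin.cons 0 fun i => -(A i.succ 0 / A 0 0)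
  let cleared : Matrix (Fin (n + 1)) (Fin (n + 1)) K :=
    Matrix.of fun i j => A i j + coeff i * A 0 j
  have det_cleared : cleared.det = A.det :=
    Matrix.det_eq_of_forall_row_eq_smul_add_const coeff 0 rfl fun _ _ => rfl
  have row_zero : cleared 0 0 = A 0 0 := by simp [cleared, coeff]
  have col_zero (i : Fin n) : cleared i.succ 0 = 0 := by
    simp [cleared, coeff, h]
  have rest : cleared.submatrix Fin.succ Fin.succ = cornerSchurCompl A := by
    ext i j
    simp only [cleared, coeff, Matrix.submatrix_apply, Matrix.of_apply, Fin.cons_succ,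
      cornerSchurCompl]
    ring
  rw [← det_cleared, Matrix.det_succ_column_zero, Fin.sum_univ_succ]
  simp [row_zero, col_zero, rest, Fin.succAbove_zero]

theorem det_submatrix_cons_zero {k : ℕ} {A : Matrix (Fin (m + 1)) (Fin (n + 1)) K}
    (h : A 0 0 ≠ 0) (r : Fin k → Fin m) (c : Fin k → Fin n) :
    (A.submatrix (Fin.cons 0 (Fin.succ ∘ r)) (Fin.cons 0 (Fin.succ ∘ c))).det =
      A 0 0 * ((cornerSchurCompl A).submatrix r c).det :=
  det_eq_mul_det_cornerSchurCompl h

theorem det_submatrix_rev_succAbove {R : Type*} [CommRing R]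
    (A : Matrix (Fin (n + 1)) (Fin (n + 1)) R) (i j : Fin (n + 1)) :
    ((A.submatrix Fin.rev Fin.rev).submatrix i.rev.succAbove j.rev.succAbove).det =
      (A.submatrix i.succAbove j.succAbove).det := by
  rw [← Matrix.det_submatrix_equiv_self Fin.revPerm (A.submatrix _ _)]
  congr 1
  ext a b
  simp [Fin.rev_succAbove]

theorem succ_succAbove_eq_cons (i : Fin (n + 1)) :
    i.succ.succAbove = Fin.cons 0 (Fin.succ ∘ i.succAbove) := by
  funext x
  cases x using Fin.cases <;> simp

theorem det_submatrix_succ_succAbove {A : Matrix (Fin (n + 2)) (Fin (n + 2)) K} (h : A 0 0 ≠ 0)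
    (i j : Fin (n + 1)) : (A.submatrix i.succ.succAbove j.succ.succAbove).det =
      A 0 0 * ((cornerSchurCompl A).submatrix i.succAbove j.succAbove).det := by
  rw [succ_succAbove_eq_cons, succ_succAbove_eq_cons, det_submatrix_cons_zero h]

end SchurComplement

/-! ### Totally nonnegative matrices -/

section TotallyNonneg

variable {n k : ℕ}

theorem strictMono_rev_comp_rev {s : Fin k → Fin n} (hs : StrictMono s) :
    StrictMono (Fin.rev ∘ s ∘ Fin.rev) :=
  Fin.rev_strictAnti.comp (hs.comp_strictAnti Fin.rev_strictAnti)

namespace TotallyNonneg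

variable {A B : Matrix (Fin n) (Fin n) ℝ}

theorem apply_nonneg (hA : TotallyNonneg A) (i j : Fin n) : 0 ≤ A i j := by
  simpa using hA 1 (fun _ => i) (fun _ => j) (Subsingleton.strictMono _) (Subsingleton.strictMono _)

theorem mul_le_mul_of_lt_of_lt (hA : TotallyNonneg A) {i i' j j' : Fin n} (hi : i < i')
    (hj : j < j') : A i j' * A i' j ≤ A i j * A i' j' := by
  have := hA 2 ![i, i'] ![j, j'] (by simpa using hi) (by simpa using hj)
  rw [Matrix.det_fin_two] at this
  exact sub_nonneg.1 this

theorem submatrix (hA : TotallyNonneg A) {f g : Fin k → Fin n} (hf : StrictMono f)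
    (hg : StrictMono g) : TotallyNonneg (A.submatrix f g) := fun l r c hr hc =>
  hA l (f ∘ r) (g ∘ c) (hf.comp hr) (hg.comp hc)

theorem transpose (hA : TotallyNonneg A) : TotallyNonneg A.transpose := fun l r c hr hc => by
  rw [← Matrix.transpose_submatrix, Matrix.det_transpose]
  exact hA l c r hc hr

theorem submatrix_rev (hA : TotallyNonneg A) : TotallyNonneg (A.submatrix Fin.rev Fin.rev) :=
  fun l r c hr hc => by
  rw [← Matrix.det_submatrix_equiv_self Fin.revPerm]
  exact hA l _ _ (strictMono_rev_comp_rev hr) (strictMono_rev_comp_rev hc)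

theorem one : TotallyNonneg (1 : Matrix (Fin n) (Fin n) ℝ) := fun l r c hr hc => by
  by_cases hrc : ∀ i, ∃ j, r i = c j
  · choose g hg using hrc
    have hg_mono : StrictMono g := fun i j hij => hc.lt_iff_lt.1 (by simpa only [hg] using hr hij)
    obtain rfl : r = c := funext fun i => by rw [hg i, hg_mono.eq_id, id_eq]
    rw [Matrix.submatrix_one _ hr.injective, Matrix.det_one]
    exact zero_le_one
  · push Not at hrc
    obtain ⟨i, hi⟩ := hrc
    exact (Matrix.det_eq_zero_of_row_eq_zero i fun j => by
      rw [Matrix.submatrix_apply, Matrix.one_apply_ne (hi j)]).ge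

theorem mul (hA : TotallyNonneg A) (hB : TotallyNonneg B) : TotallyNonneg (A * B) := by
  intro l r c hr hc
  rw [det_submatrix_mul]
  refine Finset.sum_nonneg fun s hs => ?_
  rw [Finset.mem_filter_univ] at hs
  exact mul_nonneg (hA l r s hr hs) (hB l s c hs hc)

theorem det_submatrix_mul_pos (hA : TotallyNonneg A) (hB : TotallyNonneg B)
    {r s c : Fin k → Fin n} (hr : StrictMono r) (hs : StrictMono s) (hc : StrictMono c)
    (hrs : 0 < (A.submatrix r s).det) (hsc : 0 < (B.submatrix s c).det) :
    0 < ((A * B).submatrix r c).det := by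
  rw [det_submatrix_mul]
  refine Finset.sum_pos' (fun s' hs' => ?_)
    ⟨s, (Finset.mem_filter_univ s).2 hs, mul_pos hrs hsc⟩
  rw [Finset.mem_filter_univ] at hs'
  exact mul_nonneg (hA k r s' hr hs') (hB k s' c hs' hc)

end TotallyNonneg

theorem totallyNonneg_list_prod {l : List (Matrix (Fin n) (Fin n) ℝ)}
    (hl : ∀ A ∈ l, TotallyNonneg A) : TotallyNonneg l.prod :=
  List.prod_induction TotallyNonneg (fun _ _ => TotallyNonneg.mul) TotallyNonneg.one hl

theorem det_submatrix_list_prod_pos (l : List (Matrix (Fin n) (Fin n) ℝ))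
    (hl : ∀ A ∈ l, TotallyNonneg A) (x : ℕ → Fin k → Fin n) (hx : ∀ t, StrictMono (x t))
    (hpos : ∀ A ∈ l, ∀ t, 0 < (A.submatrix (x t) (x (t + 1))).det) :
    0 < (l.prod.submatrix (x 0) (x l.length)).det := by
  induction l generalizing x with
  | nil => simp [Matrix.submatrix_one _ (hx 0).injective]
  | cons A l ih =>
    rw [List.forall_mem_cons] at hl hpos
    rw [List.prod_cons]
    exact hl.1.det_submatrix_mul_pos (totallyNonneg_list_prod hl.2) (hx 0) (hx 1) (hx _)
      (hpos.1 0) (ih hl.2 (fun t => x (t + 1)) (fun t => hx _) fun B hB t => hpos.2 B hB _)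

end TotallyNonneg

/-! ### Nonsingular totally nonnegative matrices -/

/-- Nonsingular totally nonnegative matrices. The class contains the oscillatory matrices and,
unlike these, is closed under Schur complements and under the deletions of a row and a column
considered below. -/
structure NonsingularTN {n : ℕ} (A : Matrix (Fin n) (Fin n) ℝ) : Prop where
  totallyNonneg : TotallyNonneg A
  det_ne_zero : A.det ≠ 0

namespace NonsingularTN

section

variable {n : ℕ} {A : Matrix (Fin n) (Fin n) ℝ}

theorem det_pos (hA : NonsingularTN A) : 0 < A.det :=
  lt_of_le_of_ne (hA.totallyNonneg n id id strictMono_id strictMono_id) hA.det_ne_zero.symm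

theorem transpose (hA : NonsingularTN A) : NonsingularTN A.transpose :=
  ⟨hA.totallyNonneg.transpose, A.det_transpose.trans_ne hA.det_ne_zero⟩

theorem submatrix_rev (hA : NonsingularTN A) : NonsingularTN (A.submatrix Fin.rev Fin.rev) :=
  ⟨hA.totallyNonneg.submatrix_rev,
    (Matrix.det_submatrix_equiv_self Fin.revPerm A).trans_ne hA.det_ne_zero⟩

end

section Corner

variable {n : ℕ} {A : Matrix (Fin (n + 1)) (Fin (n + 1)) ℝ}

theorem apply_zero_zero_pos (hA : NonsingularTN A) : 0 < A 0 0 := by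
  have nonneg := hA.totallyNonneg.apply_nonneg
  by_contra h
  have corner : A 0 0 = 0 := le_antisymm (not_lt.1 h) (nonneg 0 0)
  obtain ⟨j, hj⟩ : ∃ j, A 0 j ≠ 0 := by
    by_contra! row_zero
    exact hA.det_ne_zero (Matrix.det_eq_zero_of_row_eq_zero 0 row_zero)
  have hj_pos : 0 < A 0 j := lt_of_le_of_ne (nonneg 0 j) hj.symm
  have hj0 : 0 < j := Fin.pos_iff_ne_zero.2 fun h => hj (h ▸ corner)
  refine hA.det_ne_zero (Matrix.det_eq_zero_of_column_eq_zero 0 fun p => ?_)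
  rcases eq_or_ne p 0 with rfl | hp
  · exact corner
  · have := hA.totallyNonneg.mul_le_mul_of_lt_of_lt (Fin.pos_iff_ne_zero.2 hp) hj0
    rw [corner, zero_mul] at this
    exact le_antisymm (nonpos_of_mul_nonpos_right this hj_pos) (nonneg p 0)

theorem schurCompl (hA : NonsingularTN A) : NonsingularTN (cornerSchurCompl A) := by
  have corner := hA.apply_zero_zero_pos
  have cons_zero {k : ℕ} {s : Fin k → Fin n} (hs : StrictMono s) :
      StrictMono (Fin.cons 0 (Fin.succ ∘ s) : Fin (k + 1) → Fin (n + 1)) :=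
    Fin.strictMono_cons.2 ⟨fun _ => Fin.succ_pos _, Fin.strictMono_succ.comp hs⟩
  constructor
  · intro k r c hr hc
    have := hA.totallyNonneg (k + 1) _ _ (cons_zero hr) (cons_zero hc)
    rw [det_submatrix_cons_zero corner.ne'] at this
    exact nonneg_of_mul_nonneg_right this corner
  · have := hA.det_ne_zero
    rw [det_eq_mul_det_cornerSchurCompl corner.ne'] at this
    exact right_ne_zero_of_mul this

theorem schurCompl_le (hA : NonsingularTN A) (i j : Fin n) :
    cornerSchurCompl A i j ≤ A i.succ j.succ :=
  have nonneg := hA.totallyNonneg.apply_nonneg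
  sub_le_self _ (div_nonneg (mul_nonneg (nonneg _ _) (nonneg _ _)) (nonneg _ _))

end Corner

theorem apply_self_pos {n : ℕ} {A : Matrix (Fin n) (Fin n) ℝ} (hA : NonsingularTN A) (i : Fin n) :
    0 < A i i := by
  induction n with
  | zero => exact i.elim0
  | succ n ih =>
    cases i using Fin.cases with
    | zero => exact hA.apply_zero_zero_pos
    | succ i => exact (ih hA.schurCompl i).trans_le (hA.schurCompl_le i i)

section Deletion

variable {n : ℕ} {A : Matrix (Fin (n + 1)) (Fin (n + 1)) ℝ}

theorem schurCompl_apply_pos_of_lt (hA : NonsingularTN A) {i j : Fin n} (hij : i < j)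
    (hpos : 0 < A i.succ j.succ) : 0 < cornerSchurCompl A i j := by
  have nonneg := hA.totallyNonneg.apply_nonneg
  have diag : 0 < cornerSchurCompl A i i := hA.schurCompl.apply_self_pos i
  refine lt_of_le_of_ne (hA.schurCompl.totallyNonneg.apply_nonneg i j) fun zero => ?_
  have minor : A 0 j.succ * A i.succ i.succ ≤ A 0 i.succ * A i.succ j.succ :=
    hA.totallyNonneg.mul_le_mul_of_lt_of_lt i.succ_pos (Fin.succ_lt_succ_iff.2 hij)
  have minor_eq : A 0 i.succ * A i.succ j.succ - A 0 j.succ * A i.succ i.succ =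
      A 0 i.succ * cornerSchurCompl A i j - A 0 j.succ * cornerSchurCompl A i i := by
    simp only [cornerSchurCompl]
    ring
  have row_zero : A 0 j.succ = 0 := by
    have : A 0 j.succ * cornerSchurCompl A i i ≤ 0 := by
      rw [← zero, mul_zero] at minor_eq
      linarith
    exact le_antisymm (nonpos_of_mul_nonpos_left this diag) (nonneg _ _)
  simp only [cornerSchurCompl, row_zero, mul_zero, zero_div, sub_zero] at zero
  exact hpos.ne zero

theorem schurCompl_apply_pos (hA : NonsingularTN A) {i j : Fin n}
    (hpos : 0 < A i.succ j.succ) : 0 < cornerSchurCompl A i j := by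
  rcases lt_trichotomy i j with hij | rfl | hij
  · exact hA.schurCompl_apply_pos_of_lt hij hpos
  · exact hA.schurCompl.apply_self_pos i
  · simpa only [cornerSchurCompl_transpose, Matrix.transpose_apply] using
      hA.transpose.schurCompl_apply_pos_of_lt hij hpos

theorem det_submatrix_succAbove_ne_zero (hA : NonsingularTN A) {i j : Fin (n + 1)}
    (hij : (i : ℕ) ≤ j + 1) (hji : (j : ℕ) ≤ i + 1) (hpos : 0 < A j i) :
    (A.submatrix i.succAbove j.succAbove).det ≠ 0 := by
  induction n with
  | zero => simp
  | succ n ih =>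
    have away_from_zero {A : Matrix (Fin (n + 2)) (Fin (n + 2)) ℝ} (hA : NonsingularTN A)
        {i j : Fin (n + 2)} (hij : (i : ℕ) ≤ j + 1) (hji : (j : ℕ) ≤ i + 1) (hpos : 0 < A j i)
        (hi : i ≠ 0) (hj : j ≠ 0) : (A.submatrix i.succAbove j.succAbove).det ≠ 0 := by
      obtain ⟨i, rfl⟩ := Fin.exists_succ_eq.2 hi
      obtain ⟨j, rfl⟩ := Fin.exists_succ_eq.2 hj
      have corner := hA.apply_zero_zero_pos.ne'
      rw [det_submatrix_succ_succAbove corner]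
      exact mul_ne_zero corner <| ih hA.schurCompl (by simpa using hij) (by simpa using hji)
        (hA.schurCompl_apply_pos hpos)
    by_cases h0 : i ≠ 0 ∧ j ≠ 0
    · exact away_from_zero hA hij hji hpos h0.1 h0.2
    by_cases h1 : i.rev ≠ 0 ∧ j.rev ≠ 0
    · rw [← det_submatrix_rev_succAbove]
      refine away_from_zero hA.submatrix_rev ?_ ?_ (by simpa using hpos) h1.1 h1.2 <;>
        · simp only [Fin.val_rev]
          omega
    · obtain rfl : n = 0 := by
        simp only [ne_eq, Fin.ext_iff, Fin.val_rev, Fin.val_zero] at h0 h1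
        omega
      have opposite_corners : ∀ i j : Fin 2, ¬(i ≠ 0 ∧ j ≠ 0) → ¬(i.rev ≠ 0 ∧ j.rev ≠ 0) →
          i.succAbove 0 = j ∧ j.succAbove 0 = i := by decide
      simpa [opposite_corners i j h0 h1] using hpos.ne'

theorem submatrix_succAbove (hA : NonsingularTN A) {i j : Fin (n + 1)} (hij : (i : ℕ) ≤ j + 1)
    (hji : (j : ℕ) ≤ i + 1) (hpos : 0 < A j i) :
    NonsingularTN (A.submatrix i.succAbove j.succAbove) :=
  ⟨hA.totallyNonneg.submatrix (Fin.strictMono_succAbove i) (Fin.strictMono_succAbove j),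
    hA.det_submatrix_succAbove_ne_zero hij hji hpos⟩

end Deletion
end NonsingularTN

/-! ### Quasi-principal minors -/

section

variable {k n : ℕ}

theorem val_succAbove (i : Fin (n + 1)) (x : Fin n) :
    (i.succAbove x : ℕ) = if (x : ℕ) < i then (x : ℕ) else x + 1 := by
  simp only [Fin.succAbove, Fin.lt_def, Fin.val_castSucc, apply_ite Fin.val, Fin.val_succ]

theorem succAbove_eq_or_swap {i j : Fin (n + 1)} (hij : (i : ℕ) ≤ j + 1) (hji : (j : ℕ) ≤ i + 1)
    (x : Fin n) : i.succAbove x = j.succAbove x ∨ i.succAbove x = j ∧ j.succAbove x = i := by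
  simp only [Fin.ext_iff, val_succAbove]
  split_ifs <;> omega

theorem le_add_one_of_succAbove_le {i j : Fin (n + 1)} (hij : (i : ℕ) ≤ j + 1)
    (hji : (j : ℕ) ≤ i + 1) {x y : Fin n} (h : (i.succAbove x : ℕ) ≤ j.succAbove y + 1) :
    (x : ℕ) ≤ y + 1 := by
  simp only [val_succAbove] at h
  split_ifs at h <;> omega

/-- Rows `r` and columns `c` of a quasi-principal minor. Gantmacher and Krein ask for
`|r p - c p| ≤ 1` and `max (r p) (c p) < min (r q) (c q)` for `p < q`; given the other fields, the
latter says that a row index and a column index agree only in the same position. -/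
structure QuasiPrincipal {k n : ℕ} (r c : Fin k → Fin n) : Prop where
  strictMono_row : StrictMono r
  strictMono_col : StrictMono c
  row_le : ∀ p, (r p : ℕ) ≤ c p + 1
  col_le : ∀ p, (c p : ℕ) ≤ r p + 1
  eq_of_row_eq_col : ∀ ⦃p q⦄, r p = c q → p = q

theorem QuasiPrincipal.of_succAbove {i j : Fin (n + 1)} {r c : Fin k → Fin n}
    (hij : (i : ℕ) ≤ j + 1) (hji : (j : ℕ) ≤ i + 1)
    (hswap : ∀ p q, i.succAbove (r p) = j → j.succAbove (c q) = i → p = q)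
    (h : QuasiPrincipal (i.succAbove ∘ r) (j.succAbove ∘ c)) : QuasiPrincipal r c where
  strictMono_row _ _ hpq := Fin.succAbove_lt_succAbove_iff.1 (h.strictMono_row hpq)
  strictMono_col _ _ hpq := Fin.succAbove_lt_succAbove_iff.1 (h.strictMono_col hpq)
  row_le p := le_add_one_of_succAbove_le hij hji (h.row_le p)
  col_le p := le_add_one_of_succAbove_le hji hij (h.col_le p)
  eq_of_row_eq_col p q hpq := by
    rcases succAbove_eq_or_swap hij hji (c q) with heq | ⟨hi, hj⟩
    · exact h.eq_of_row_eq_col ((congrArg i.succAbove hpq).trans heq)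
    · exact hswap p q (hpq ▸ hi) hj

end

theorem exists_succAbove_comp_eq {k n : ℕ} {i : Fin (n + 1)} {f : Fin k → Fin (n + 1)}
    (hf : ∀ p, f p ≠ i) : ∃ g : Fin k → Fin n, i.succAbove ∘ g = f := by
  choose g hg using fun p => Fin.exists_succAbove_eq (hf p)
  exact ⟨g, funext hg⟩

theorem NonsingularTN.det_submatrix_pos {k n : ℕ} {A : Matrix (Fin n) (Fin n) ℝ}
    (hA : NonsingularTN A) {r c : Fin k → Fin n} (h : QuasiPrincipal r c)
    (hpos : ∀ p, 0 < A (r p) (c p)) : 0 < (A.submatrix r c).det := by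
  induction n with
  | zero =>
    have : IsEmpty (Fin k) := Function.isEmpty r
    simp
  | succ n ih =>
    have delete (i j : Fin (n + 1)) (hij : (i : ℕ) ≤ j + 1) (hji : (j : ℕ) ≤ i + 1)
        (hpos_ji : 0 < A j i) (hr : ∀ p, r p ≠ i) (hc : ∀ p, c p ≠ j)
        (hswap : ∀ p q, r p = j → c q = i → p = q) : 0 < (A.submatrix r c).det := by
      obtain ⟨r, rfl⟩ := exists_succAbove_comp_eq hr
      obtain ⟨c, rfl⟩ := exists_succAbove_comp_eq hc
      exact ih (hA.submatrix_succAbove hij hji hpos_ji) (h.of_succAbove hij hji hswap) hpos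
    by_cases hrc : r = c
    · subst hrc
      by_cases hsurj : Function.Surjective r
      · let e := Equiv.ofBijective r ⟨h.strictMono_row.injective, hsurj⟩
        exact hA.det_pos.trans_eq (Matrix.det_submatrix_equiv_self e A).symm
      · obtain ⟨i, hi⟩ := not_forall.1 hsurj
        rw [not_exists] at hi
        exact delete i i (Nat.le_succ _) (Nat.le_succ _) (hA.apply_self_pos i) hi hi
          fun p _ hp => absurd hp (hi p)
    · obtain ⟨p, hp⟩ := Function.ne_iff.1 hrc
      refine delete (c p) (r p) (h.col_le p) (h.row_le p) (hpos p) (fun q hq => ?_) (fun q hq => ?_)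
        fun q q' hq hq' => ?_
      · exact hp ((h.eq_of_row_eq_col hq) ▸ hq)
      · exact hp ((h.eq_of_row_eq_col hq.symm) ▸ hq.symm)
      · exact (h.strictMono_row.injective hq).trans (h.strictMono_col.injective hq').symm

/-! ### Oscillatory matrices -/

section

variable {n : ℕ} {A : Matrix (Fin n) (Fin n) ℝ}

theorem NonsingularTN.apply_eq_zero_of_le_of_le (hA : NonsingularTN A) {i j p q : Fin n}
    (hij : i < j) (h0 : A i j = 0) (hp : p ≤ i) (hq : j ≤ q) : A p q = 0 := by
  have nonneg := hA.totallyNonneg.apply_nonneg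
  have row_i : A i q = 0 := by
    rcases hq.eq_or_lt with rfl | hq
    · exact h0
    · have := hA.totallyNonneg.mul_le_mul_of_lt_of_lt hij hq
      rw [h0, zero_mul] at this
      exact le_antisymm (nonpos_of_mul_nonpos_left this (hA.apply_self_pos j)) (nonneg i q)
  rcases hp.eq_or_lt with rfl | hp
  · exact row_i
  · have := hA.totallyNonneg.mul_le_mul_of_lt_of_lt hp (hij.trans_le hq)
    rw [row_i, mul_zero] at this
    exact le_antisymm (nonpos_of_mul_nonpos_left this (hA.apply_self_pos i)) (nonneg p q)

namespace TotallyPos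

theorem apply_pos (hA : TotallyPos A) (i j : Fin n) : 0 < A i j := by
  simpa using hA 1 (fun _ => i) (fun _ => j) (Subsingleton.strictMono _) (Subsingleton.strictMono _)

theorem transpose (hA : TotallyPos A) : TotallyPos A.transpose := fun l r c hr hc => by
  rw [← Matrix.transpose_submatrix, Matrix.det_transpose]
  exact hA l c r hc hr

end TotallyPos

namespace Oscillatory

theorem nonsingularTN (hA : Oscillatory A) : NonsingularTN A := by
  obtain ⟨hTN, k, hk, hTP⟩ := hA
  have det_pow_pos : 0 < (A ^ k).det := hTP n id id strictMono_id strictMono_id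
  rw [Matrix.det_pow] at det_pow_pos
  exact ⟨hTN, ne_zero_pow hk.ne' det_pow_pos.ne'⟩

theorem transpose (hA : Oscillatory A) : Oscillatory A.transpose := by
  obtain ⟨hTN, k, hk, hTP⟩ := hA
  exact ⟨hTN.transpose, k, hk, Matrix.transpose_pow A k ▸ hTP.transpose⟩

theorem apply_pos_of_val_add_one_eq (hA : Oscillatory A) {i j : Fin n} (hij : (i : ℕ) + 1 = j) :
    0 < A i j := by
  refine lt_of_le_of_ne (hA.1.apply_nonneg i j) fun zero => ?_
  obtain ⟨k, -, hTP⟩ := hA.2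
  have hlt : i < j := Fin.lt_def.2 (by omega)
  have block : Matrix.BlockTriangular A (· ≤ i) := fun p q hpq => by
    obtain ⟨hp, hq⟩ : p ≤ i ∧ ¬ q ≤ i := Classical.not_imp.1 hpq.not_ge
    exact hA.nonsingularTN.apply_eq_zero_of_le_of_le hlt zero.symm hp (by omega)
  have block_lt : (j ≤ i) < (i ≤ i) :=
    lt_of_le_not_ge (fun _ => le_rfl) fun h => hlt.not_ge (h le_rfl)
  exact (hTP.apply_pos i j).ne' (block.pow k block_lt)

theorem apply_pos (hA : Oscillatory A) {i j : Fin n} (hij : (i : ℕ) ≤ j + 1)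
    (hji : (j : ℕ) ≤ i + 1) : 0 < A i j := by
  obtain h | h | h : (i : ℕ) + 1 = j ∨ i = j ∨ (j : ℕ) + 1 = i := by omega
  · exact hA.apply_pos_of_val_add_one_eq h
  · exact h ▸ hA.nonsingularTN.apply_self_pos i
  · exact hA.transpose.apply_pos_of_val_add_one_eq h

theorem det_submatrix_pos (hA : Oscillatory A) {k : ℕ} {r c : Fin k → Fin n}
    (h : QuasiPrincipal r c) : 0 < (A.submatrix r c).det :=
  hA.nonsingularTN.det_submatrix_pos h fun p => hA.apply_pos (h.row_le p) (h.col_le p)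

end Oscillatory

end

/-! ### Moving one index tuple to another -/

section

variable {k n : ℕ}

/-- A path of `k`-tuples from `r` to `c` in which every index moves by at most one in each step.
Downward moves start at the smallest index and upward moves at the largest, index `p` waiting for
`p` or `p.rev` steps respectively, so that no index enters a place that is still occupied. All
subtractions are truncated. -/
def staircasePath (r c : Fin k → Fin n) (t : ℕ) (p : Fin k) : Fin n :=
  ⟨max (r p - (t - p)) (min (c p) (r p + (t - p.rev))), by omega⟩

theorem staircasePath_zero (r c : Fin k → Fin n) : staircasePath r c 0 = r := by
  ext p
  simp only [staircasePath]
  omega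

theorem quasiPrincipal_staircasePath {r c : Fin k → Fin n} (hr : StrictMono r) (hc : StrictMono c)
    (t : ℕ) : QuasiPrincipal (staircasePath r c t) (staircasePath r c (t + 1)) := by
  have interlace {p q : Fin k} (hpq : p < q) {s s' : ℕ} (hs : s ≤ s' + 1) (hs' : s' ≤ s + 1) :
      staircasePath r c s p < staircasePath r c s' q := by
    have hrpq := hr hpq
    have hcpq := hc hpq
    simp only [staircasePath, Fin.lt_def, Fin.val_rev] at hpq hrpq hcpq ⊢
    omega
  refine ⟨fun p q hpq => interlace hpq (Nat.le_succ _) (Nat.le_succ _),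
    fun p q hpq => interlace hpq (Nat.le_succ _) (Nat.le_succ _), fun p => ?_, fun p => ?_,
    fun p q hpq => ?_⟩
  · simp only [staircasePath]
    omega
  · simp only [staircasePath]
    omega
  · by_contra hne
    rcases lt_or_gt_of_ne hne with h | h
    · exact (interlace h (by omega) (by omega)).ne hpq
    · exact (interlace h (by omega) (by omega)).ne' hpq

theorem val_le_val_of_strictMono {c : Fin k → Fin n} (hc : StrictMono c) (p : Fin k) :
    (p : ℕ) ≤ c p := by
  have : (Finset.Iio p).card ≤ (Finset.Iio (c p)).card :=
    Finset.card_le_card_of_injOn c (fun q hq => by simpa using hc (by simpa using hq))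
      hc.injective.injOn
  simpa only [Fin.card_Iio] using this

theorem staircasePath_eq_of_le (r : Fin k → Fin n) {c : Fin k → Fin n} (hc : StrictMono c) {t : ℕ}
    (ht : n ≤ t + 1) : staircasePath r c t = c := by
  ext p
  have lower : (p : ℕ) ≤ c p := val_le_val_of_strictMono hc p
  have upper : (p.rev : ℕ) ≤ (c p).rev := by
    simpa using val_le_val_of_strictMono (strictMono_rev_comp_rev hc) p.rev
  simp only [staircasePath, Fin.val_rev] at upper ⊢
  omega

end

theorem stmt15_general {n : ℕ} {l : List (Matrix (Fin n) (Fin n) ℝ)} (hl : ∀ A ∈ l, Oscillatory A)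
    (hn : n ≤ l.length + 1) : TotallyPos l.prod := by
  intro k r c hr hc
  have step (t : ℕ) : QuasiPrincipal (staircasePath r c t) (staircasePath r c (t + 1)) :=
    quasiPrincipal_staircasePath hr hc t
  have := det_submatrix_list_prod_pos l (fun A hA => (hl A hA).1) (staircasePath r c)
    (fun t => (step t).strictMono_row) fun A hA t => (hl A hA).det_submatrix_pos (step t)
  rwa [staircasePath_zero, staircasePath_eq_of_le r hc hn] at this

theorem stmt15 {n : ℕ} (hn : 2 ≤ n) (B : Fin (n - 1) → Matrix (Fin n) (Fin n) ℝ)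
    (hB : ∀ i, Oscillatory (B i)) :
    TotallyPos (List.ofFn B).prod :=
  stmt15_general (List.forall_mem_ofFn_iff.2 hB) (by rw [List.length_ofFn]; omega)
end

section
/- Let A be an n×n oscillatory matrix. Then r(A) = max{r_ℓ(A), r_u(A)}, where r_ℓ(A) is the least positive integer w such that all lower-left corner minors of A^w, except possibly det(A^w), are positive, and r_u(A) is the least positive integer v such that all upper-right corner minors of A^v, except possibly det(A^v), are positive. -/
/-- The lower-left corner minor M({n−j+1,…,n}|{1,…,j}). -/
def llMinor {n : ℕ} (M : Matrix (Fin n) (Fin n) ℝ) (j : ℕ) (hj : j ≤ n) : ℝ :=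
  (M.submatrix (fun k : Fin j => (⟨n - j + k.val, by have := k.isLt; omega⟩ : Fin n))
      (fun k : Fin j => (⟨k.val, by have := k.isLt; omega⟩ : Fin n))).det

/-- The upper-right corner minor M({1,…,j}|{n−j+1,…,n}). -/
def urMinor {n : ℕ} (M : Matrix (Fin n) (Fin n) ℝ) (j : ℕ) (hj : j ≤ n) : ℝ :=
  (M.submatrix (fun k : Fin j => (⟨k.val, by have := k.isLt; omega⟩ : Fin n))
      (fun k : Fin j => (⟨n - j + k.val, by have := k.isLt; omega⟩ : Fin n))).det

/-!
Fix index tuples `S`, `T` with `M[S|T] ≠ 0`. By Sylvester's identity the minors of `M` bordering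
`M[S|T]` form, up to a factor, a matrix whose 2×2 minors are again bordered minors of `M`. Weighting
each minor by the Vandermonde determinants of its row and column tuples removes the signs coming
from unsorted tuples, so for totally nonnegative `M` the weighted bordered minors have nonnegative
2×2 minors. Hence a vanishing minor forces vanishing in one direction along a row or a column of
this array, and in a nonsingular matrix it can be pushed into a corner: a nonsingular totally
nonnegative matrix has positive leading principal minors, and it is totally positive as soon as its
corner minors are positive. By Cauchy–Binet and the positivity of the leading principal minors,
positive lower-left corner minors stay positive from one power to the next, and transposition gives
the same for the upper-right ones. So the exponents `m` for which `A ^ m` is totally positive are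
those above both thresholds.
-/

section Determinants

open Matrix

variable {R K ι κ m n : Type*} [CommRing R] [Field K]

theorem det_submatrix_transpose [Fintype m] [DecidableEq m]
    (M : Matrix ι κ R) (r : m → ι) (c : m → κ) :
    (Mᵀ.submatrix c r).det = (M.submatrix r c).det := by
  rw [← transpose_submatrix, det_transpose]

theorem det_submatrix_comp_perm [Fintype m] [DecidableEq m]
    (M : Matrix ι κ R) (r : m → ι) (c : m → κ)
    (σ τ : Equiv.Perm m) :
    (M.submatrix (r ∘ σ) (c ∘ τ)).det =
      Equiv.Perm.sign σ * Equiv.Perm.sign τ * (M.submatrix r c).det := by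
  have h : M.submatrix (r ∘ σ) (c ∘ τ) = ((M.submatrix r c).submatrix id τ).submatrix σ id := rfl
  rw [h, det_permute, det_permute', mul_assoc]

theorem injective_right_of_det_submatrix_ne_zero [Fintype m] [DecidableEq m]
    {M : Matrix ι κ R} {r : m → ι} {c : m → κ} (h : (M.submatrix r c).det ≠ 0) :
    Function.Injective c := by
  contrapose! h
  obtain ⟨i, j, hij, hne⟩ := Function.not_injective_iff.1 h
  exact det_zero_of_column_eq hne fun l => by simp only [submatrix_apply, hij]

theorem injective_left_of_det_submatrix_ne_zero [Fintype m] [DecidableEq m]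
    {M : Matrix ι κ R} {r : m → ι} {c : m → κ} (h : (M.submatrix r c).det ≠ 0) :
    Function.Injective r :=
  injective_right_of_det_submatrix_ne_zero (by rwa [← det_submatrix_transpose] at h)

theorem det_mul_eq_sum [Fintype m] [DecidableEq m] [Fintype n]
    (X : Matrix m n R) (Y : Matrix n m R) :
    (X * Y).det = ∑ f : m → n, (∏ i, X i (f i)) * (Y.submatrix f id).det := by
  classical
  have hrows : X * Y = fun i => ∑ j, X i j • Y j := by
    ext i l
    simp only [mul_apply, Finset.sum_apply, Pi.smul_apply, smul_eq_mul]
  rw [hrows]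
  exact (detRowAlternating.map_sum fun i j => X i j • Y j).trans <|
    Finset.sum_congr rfl fun f _ =>
      detRowAlternating.map_smul_univ (fun i => X i (f i)) fun i => Y (f i)

/-- Cauchy–Binet: each set of `card m` columns is counted `(card m)!` times. -/
theorem card_factorial_mul_det_mul [Fintype m] [DecidableEq m] [Fintype n]
    (X : Matrix m n R) (Y : Matrix n m R) :
    (Fintype.card m).factorial * (X * Y).det =
      ∑ f : m → n, (X.submatrix id f).det * (Y.submatrix f id).det := by
  have hperm (σ : Equiv.Perm m) : (X * Y).det =
      ∑ f : m → n, (Equiv.Perm.sign σ * ∏ i, X i (f (σ i))) * (Y.submatrix f id).det := by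
    have hsign : ((Equiv.Perm.sign σ : ℤ) : R) * (Equiv.Perm.sign σ : ℤ) = 1 := by
      rw [← Int.cast_mul, ← Units.val_mul, Int.units_mul_self, Units.val_one, Int.cast_one]
    rw [det_mul_eq_sum]
    refine Fintype.sum_equiv (σ.arrowCongr (Equiv.refl n)) _ _ fun f => ?_
    change _ = (_ * ∏ i, X i (f (σ.symm (σ i)))) *
      ((Y.submatrix f id).submatrix σ.symm id).det
    simp only [Equiv.symm_apply_apply, det_permute, Equiv.Perm.sign_symm]
    linear_combination (-(∏ i, X i (f i)) * (Y.submatrix f id).det) * hsign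
  calc (Fintype.card m).factorial * (X * Y).det
      = ∑ _σ : Equiv.Perm m, (X * Y).det := by simp [Fintype.card_perm]
    _ = ∑ f : m → n, (∑ σ : Equiv.Perm m, Equiv.Perm.sign σ * ∏ i, X i (f (σ i))) *
          (Y.submatrix f id).det := by
      simp_rw [Finset.sum_mul]
      rw [Finset.sum_comm]
      exact Finset.sum_congr rfl fun σ _ => hperm σ
    _ = ∑ f : m → n, (X.submatrix id f).det * (Y.submatrix f id).det := by
      refine Finset.sum_congr rfl fun f _ => ?_
      congr 1
      rw [← det_transpose, det_apply']
      rfl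

/-- The Schur complement of `M[S|T]` in `M`, kept on the full index types: when `M[S|T]` is
nonsingular it vanishes on the rows in `S` and the columns in `T`, and its entries times
`det M[S|T]` are the minors of `M` bordering `M[S|T]`. -/
noncomputable def schurComplement {k : ℕ} (M : Matrix ι κ K) (S : Fin k → ι) (T : Fin k → κ) :
    Matrix ι κ K :=
  M - M.submatrix id T * (M.submatrix S T)⁻¹ * M.submatrix S id

theorem det_submatrix_vecAppend (M : Matrix ι κ K) {k l o : ℕ} (ho : o = l + k)
    {S : Fin k → ι} {T : Fin k → κ} (hST : (M.submatrix S T).det ≠ 0)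
    (u : Fin l → ι) (v : Fin l → κ) :
    (M.submatrix (vecAppend ho u S) (vecAppend ho v T)).det =
      (M.submatrix S T).det * ((schurComplement M S T).submatrix u v).det := by
  subst ho
  have : Invertible (M.submatrix S T) := invertibleOfIsUnitDet _ hST.isUnit
  have hblocks : (M.submatrix (vecAppend rfl u S) (vecAppend rfl v T)).submatrix
      finSumFinEquiv finSumFinEquiv =
      fromBlocks (M.submatrix u v) (M.submatrix u T) (M.submatrix S v) (M.submatrix S T) := by
    ext (i | i) (j | j) <;> simp [vecAppend]
  rw [← det_submatrix_equiv_self finSumFinEquiv, hblocks, det_fromBlocks₂₂,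
    invOf_eq_nonsing_inv]
  rfl

/-- Sylvester's determinant identity. -/
theorem det_mul_det_submatrix_vecCons_vecCons (M : Matrix ι κ K) {k : ℕ}
    {S : Fin k → ι} {T : Fin k → κ} (hST : (M.submatrix S T).det ≠ 0) (a b : ι) (c d : κ) :
    (M.submatrix S T).det *
        (M.submatrix (vecCons a (vecCons b S)) (vecCons c (vecCons d T))).det =
      (M.submatrix (vecCons a S) (vecCons c T)).det *
        (M.submatrix (vecCons b S) (vecCons d T)).det -
      (M.submatrix (vecCons a S) (vecCons d T)).det *
        (M.submatrix (vecCons b S) (vecCons c T)).det := by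
  have hone (x : ι) (y : κ) : (M.submatrix (vecCons x S) (vecCons y T)).det =
      (M.submatrix S T).det * schurComplement M S T x y := by
    simpa only [cons_vecAppend, empty_vecAppend, det_fin_one, submatrix_apply, cons_val_zero] using
      det_submatrix_vecAppend M (Nat.add_comm k 1) hST ![x] ![y]
  have htwo := det_submatrix_vecAppend M (Nat.add_comm k 2) hST ![a, b] ![c, d]
  simp only [cons_vecAppend, empty_vecAppend, det_fin_two, submatrix_apply, cons_val_zero,
    cons_val_one] at htwo
  rw [htwo]
  simp only [hone]
  ring

theorem update_comp_cycleRange_symm {k : ℕ} (p : Fin (k + 1)) (r : Fin (k + 1) → ι) (b : ι) :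
    Function.update r p b ∘ p.cycleRange.symm = vecCons b (p.removeNth r) := by
  have h := Fin.cons_removeNth_eq_comp_cycleRange_symm (Function.update r p b) p
  rw [Fin.removeNth_update, Function.update_self] at h
  exact h.symm

theorem exists_vecMul_eq_zero_of_det_update_eq_zero
    (M : Matrix ι κ R) {k : ℕ} {p : Fin (k + 1)}
    {r : Fin (k + 1) → ι} {c : Fin (k + 1) → κ}
    (hD : (M.submatrix (p.removeNth r) (p.removeNth c)).det ≠ 0) :
    ∃ u : Fin (k + 1) → R, u ≠ 0 ∧ ∀ y, (M.submatrix r (Function.update c p y)).det = 0 →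
      ∑ i, u i * M (r i) y = 0 := by
  -- The cofactors along column `p` do not depend on the column `y` put there.
  refine ⟨fun i => (-1) ^ (i + p : ℕ) * (M.submatrix (i.removeNth r) (p.removeNth c)).det,
    fun h => hD ?_, fun y hy => ?_⟩
  · simpa using congrFun h p
  · have hcol : Function.update c p y ∘ p.succAbove = p.removeNth c := by
      funext i
      rw [Function.comp_apply, Function.update_of_ne (Fin.succAbove_ne p i), Fin.removeNth]
    rw [← hy, det_succ_column _ p]
    refine Finset.sum_congr rfl fun i _ => ?_
    rw [submatrix_submatrix, submatrix_apply, Function.update_self, mul_right_comm, hcol]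
    rfl

theorem det_submatrix_eq_zero_of_det_update_eq_zero [IsDomain R]
    {M : Matrix ι κ R} {k : ℕ} {p : Fin (k + 1)}
    {r : Fin (k + 1) → ι} {c q : Fin (k + 1) → κ}
    (hD : (M.submatrix (p.removeNth r) (p.removeNth c)).det ≠ 0)
    (h : ∀ j, (M.submatrix r (Function.update c p (q j))).det = 0) :
    (M.submatrix r q).det = 0 := by
  obtain ⟨u, hu, hu0⟩ := exists_vecMul_eq_zero_of_det_update_eq_zero M hD
  exact exists_vecMul_eq_zero_iff.1 ⟨u, hu, funext fun j => hu0 _ (h j)⟩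

theorem exists_det_update_ne_zero [IsDomain R] [Fintype ι] [DecidableEq ι]
    {M : Matrix ι ι R} (hM : M.det ≠ 0) {k : ℕ} {p : Fin (k + 1)}
    {r c : Fin (k + 1) → ι} (hr : Function.Injective r)
    (hD : (M.submatrix (p.removeNth r) (p.removeNth c)).det ≠ 0) :
    ∃ y, (M.submatrix r (Function.update c p y)).det ≠ 0 := by
  by_contra! h
  obtain ⟨u, hu, hu0⟩ := exists_vecMul_eq_zero_of_det_update_eq_zero M hD
  have hrows := (linearIndependent_rows_of_det_ne_zero hM).comp r hr
  refine hu (funext fun i => Fintype.linearIndependent_iff.1 hrows u (funext fun y => ?_) i)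
  simpa using hu0 y (h y)

end Determinants

section Orientation

open Matrix

variable {n k : ℕ}

/-- The Vandermonde determinant of an index tuple. It changes sign under transpositions exactly as
a minor does, and it is positive on increasing tuples. -/
noncomputable def orientation (p : Fin k → Fin n) : ℝ :=
  (vandermonde fun i => ((p i : ℕ) : ℝ)).det

theorem orientation_comp_perm (p : Fin k → Fin n) (σ : Equiv.Perm (Fin k)) :
    orientation (p ∘ σ) = Equiv.Perm.sign σ * orientation p := by
  rw [orientation, orientation, ← det_permute]
  rfl

theorem orientation_pos {p : Fin k → Fin n} (hp : StrictMono p) : 0 < orientation p := by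
  rw [orientation, det_vandermonde]
  refine Finset.prod_pos fun i _ => Finset.prod_pos fun j hj => sub_pos.2 ?_
  exact_mod_cast hp (Finset.mem_Ioi.1 hj)

theorem orientation_ne_zero_iff {p : Fin k → Fin n} :
    orientation p ≠ 0 ↔ Function.Injective p :=
  det_vandermonde_ne_zero_iff.trans
    (Function.Injective.of_comp_iff (Nat.cast_injective.comp Fin.val_injective) p)

theorem orientation_vecCons (a : Fin n) (S : Fin k → Fin n) :
    orientation (vecCons a S) = (∏ j, (((S j : ℕ) : ℝ) - (a : ℕ))) * orientation S := by
  simp only [orientation, det_vandermonde, Fin.prod_univ_succ, Fin.prod_Ioi_zero,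
    Fin.prod_Ioi_succ, cons_val_zero, cons_val_succ]

theorem orientation_mul_orientation_vecCons_vecCons (a b : Fin n) (S : Fin k → Fin n) :
    orientation S * orientation (vecCons a (vecCons b S)) =
      (((b : ℕ) : ℝ) - (a : ℕ)) * orientation (vecCons a S) * orientation (vecCons b S) := by
  simp only [orientation_vecCons, Fin.prod_univ_succ, cons_val_zero, cons_val_succ]
  ring

/-- A minor weighted by the Vandermonde determinants of its row and column tuples, so that its sign
does not depend on the order in which rows and columns are listed. -/
noncomputable def orientedMinor (M : Matrix (Fin n) (Fin n) ℝ) (p q : Fin k → Fin n) : ℝ :=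
  orientation p * orientation q * (M.submatrix p q).det

theorem orientedMinor_comp_perm (M : Matrix (Fin n) (Fin n) ℝ) (p q : Fin k → Fin n)
    (σ τ : Equiv.Perm (Fin k)) :
    orientedMinor M (p ∘ σ) (q ∘ τ) = orientedMinor M p q := by
  simp only [orientedMinor, orientation_comp_perm, det_submatrix_comp_perm]
  rcases Int.units_eq_one_or (Equiv.Perm.sign σ) with hσ | hσ <;>
    rcases Int.units_eq_one_or (Equiv.Perm.sign τ) with hτ | hτ <;> simp [hσ, hτ]

theorem orientedMinor_eq_zero_iff {M : Matrix (Fin n) (Fin n) ℝ} {p q : Fin k → Fin n} :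
    orientedMinor M p q = 0 ↔ (M.submatrix p q).det = 0 := by
  refine ⟨fun h => ?_, fun h => by rw [orientedMinor, h, mul_zero]⟩
  by_contra hdet
  exact mul_ne_zero (mul_ne_zero
    (orientation_ne_zero_iff.2 (injective_left_of_det_submatrix_ne_zero hdet))
    (orientation_ne_zero_iff.2 (injective_right_of_det_submatrix_ne_zero hdet))) hdet h

theorem orientedMinor_mul_orientedMinor_vecCons_vecCons (M : Matrix (Fin n) (Fin n) ℝ)
    {S T : Fin k → Fin n} (hST : (M.submatrix S T).det ≠ 0) (a b c d : Fin n) :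
    orientedMinor M S T * orientedMinor M (vecCons a (vecCons b S)) (vecCons c (vecCons d T)) =
      (((b : ℕ) : ℝ) - (a : ℕ)) * (((d : ℕ) : ℝ) - (c : ℕ)) *
        (orientedMinor M (vecCons a S) (vecCons c T) * orientedMinor M (vecCons b S) (vecCons d T) -
          orientedMinor M (vecCons a S) (vecCons d T) *
            orientedMinor M (vecCons b S) (vecCons c T)) := by
  unfold orientedMinor
  linear_combination
    orientation S * orientation (vecCons a (vecCons b S)) *
      (orientation T * orientation (vecCons c (vecCons d T))) *
      det_mul_det_submatrix_vecCons_vecCons M hST a b c d +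
    ((M.submatrix (vecCons a S) (vecCons c T)).det * (M.submatrix (vecCons b S) (vecCons d T)).det -
      (M.submatrix (vecCons a S) (vecCons d T)).det *
        (M.submatrix (vecCons b S) (vecCons c T)).det) *
      (orientation T * orientation (vecCons c (vecCons d T)) *
        orientation_mul_orientation_vecCons_vecCons a b S +
      (((b : ℕ) : ℝ) - (a : ℕ)) * orientation (vecCons a S) * orientation (vecCons b S) *
        orientation_mul_orientation_vecCons_vecCons c d T)

theorem TotallyNonneg.orientedMinor_nonneg {M : Matrix (Fin n) (Fin n) ℝ} (hM : TotallyNonneg M)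
    (p q : Fin k → Fin n) : 0 ≤ orientedMinor M p q := by
  by_contra! hneg
  have hdet : (M.submatrix p q).det ≠ 0 := fun h => hneg.ne (orientedMinor_eq_zero_iff.2 h)
  have hp : StrictMono (p ∘ Tuple.sort p) := (Tuple.monotone_sort p).strictMono_of_injective <|
    (injective_left_of_det_submatrix_ne_zero hdet).comp (Tuple.sort p).injective
  have hq : StrictMono (q ∘ Tuple.sort q) := (Tuple.monotone_sort q).strictMono_of_injective <|
    (injective_right_of_det_submatrix_ne_zero hdet).comp (Tuple.sort q).injective
  rw [← orientedMinor_comp_perm M p q (Tuple.sort p) (Tuple.sort q)] at hneg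
  exact hneg.not_ge (mul_nonneg (mul_pos (orientation_pos hp) (orientation_pos hq)).le
    (hM k _ _ hp hq))

end Orientation

section TotallyNonneg

open Matrix

variable {n k : ℕ} {A B M : Matrix (Fin n) (Fin n) ℝ}

theorem TotallyNonneg.transpose_s16 (hM : TotallyNonneg M) : TotallyNonneg Mᵀ := by
  intro k r c hr hc
  rw [det_submatrix_transpose]
  exact hM k c r hc hr

theorem TotallyNonneg.det_mul_det_nonneg (hA : TotallyNonneg A) (hB : TotallyNonneg B)
    {r c : Fin k → Fin n} (hr : StrictMono r) (hc : StrictMono c) (f : Fin k → Fin n) :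
    0 ≤ (A.submatrix r f).det * (B.submatrix f c).det := by
  by_cases hf : (A.submatrix r f).det = 0
  · rw [hf, zero_mul]
  have hweight : 0 < orientation r * orientation c * orientation f ^ 2 :=
    mul_pos (mul_pos (orientation_pos hr) (orientation_pos hc))
      (sq_pos_of_ne_zero (orientation_ne_zero_iff.2 (injective_right_of_det_submatrix_ne_zero hf)))
  refine nonneg_of_mul_nonneg_right ?_ hweight
  calc 0 ≤ orientedMinor A r f * orientedMinor B f c :=
        mul_nonneg (hA.orientedMinor_nonneg r f) (hB.orientedMinor_nonneg f c)
    _ = orientation r * orientation c * orientation f ^ 2 *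
          ((A.submatrix r f).det * (B.submatrix f c).det) := by
        simp only [orientedMinor]
        ring

theorem TotallyNonneg.det_mul_det_le (hA : TotallyNonneg A) (hB : TotallyNonneg B)
    {r c : Fin k → Fin n} (hr : StrictMono r) (hc : StrictMono c) (f : Fin k → Fin n) :
    (A.submatrix r f).det * (B.submatrix f c).det ≤
      k.factorial * ((A * B).submatrix r c).det := by
  have hmul : (A * B).submatrix r c = A.submatrix r id * B.submatrix id c :=
    submatrix_mul A B r id c Function.bijective_id
  have hbinet := card_factorial_mul_det_mul (A.submatrix r id) (B.submatrix id c)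
  rw [Fintype.card_fin] at hbinet
  rw [hmul, hbinet]
  exact Finset.single_le_sum (f := fun f => (A.submatrix r f).det * (B.submatrix f c).det)
    (fun g _ => hA.det_mul_det_nonneg hB hr hc g) (Finset.mem_univ f)

theorem TotallyNonneg.mul_s16 (hA : TotallyNonneg A) (hB : TotallyNonneg B) :
    TotallyNonneg (A * B) := fun k r c hr hc =>
  nonneg_of_mul_nonneg_right
    ((mul_nonneg (hA k r r hr hr) (hB k r c hr hc)).trans (hA.det_mul_det_le hB hr hc r))
    (by positivity)

theorem TotallyNonneg.pow (hA : TotallyNonneg A) {m : ℕ} (hm : 0 < m) :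
    TotallyNonneg (A ^ m) := by
  induction m, hm using Nat.le_induction with
  | base => simpa using hA
  | succ m _ ih => exact pow_succ A m ▸ ih.mul_s16 hA

theorem TotallyNonneg.det_update_eq_zero_or (hM : TotallyNonneg M) {p : Fin (k + 1)}
    {r c : Fin (k + 1) → Fin n} (hD : (M.submatrix (p.removeNth r) (p.removeNth c)).det ≠ 0)
    (h0 : (M.submatrix r c).det = 0) {b d : Fin n}
    (hbd : 0 ≤ (((b : ℕ) : ℝ) - (r p : ℕ)) * (((d : ℕ) : ℝ) - (c p : ℕ))) :
    (M.submatrix r (Function.update c p d)).det = 0 ∨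
      (M.submatrix (Function.update r p b) c).det = 0 := by
  have hcons (x y : Fin n) : orientedMinor M (vecCons x (p.removeNth r))
      (vecCons y (p.removeNth c)) =
      orientedMinor M (Function.update r p x) (Function.update c p y) := by
    rw [← update_comp_cycleRange_symm, ← update_comp_cycleRange_symm, orientedMinor_comp_perm]
  have hsylvester := orientedMinor_mul_orientedMinor_vecCons_vecCons M hD (r p) b (c p) d
  simp only [hcons, Function.update_eq_self, orientedMinor_eq_zero_iff.2 h0, zero_mul,
    zero_sub] at hsylvester
  by_contra! ⟨hd, hb⟩
  have hpos : 0 < orientedMinor M r (Function.update c p d) *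
      orientedMinor M (Function.update r p b) c :=
    mul_pos ((hM.orientedMinor_nonneg _ _).lt_of_ne' (mt orientedMinor_eq_zero_iff.1 hd))
      ((hM.orientedMinor_nonneg _ _).lt_of_ne' (mt orientedMinor_eq_zero_iff.1 hb))
  have hbd0 : (((b : ℕ) : ℝ) - (r p : ℕ)) * (((d : ℕ) : ℝ) - (c p : ℕ)) = 0 := by
    refine le_antisymm (not_lt.1 fun hlt => ?_) hbd
    have hnonneg := mul_nonneg (hM.orientedMinor_nonneg (p.removeNth r) (p.removeNth c))
      (hM.orientedMinor_nonneg (vecCons (r p) (vecCons b (p.removeNth r)))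
        (vecCons (c p) (vecCons d (p.removeNth c))))
    rw [hsylvester, mul_neg] at hnonneg
    exact (neg_nonneg.1 hnonneg).not_gt (mul_pos hlt hpos)
  rcases mul_eq_zero.1 hbd0 with hbr | hdc
  · have hbr : b = r p := Fin.ext (by exact_mod_cast sub_eq_zero.1 hbr)
    exact hb (by rwa [hbr, Function.update_eq_self])
  · have hdc : d = c p := Fin.ext (by exact_mod_cast sub_eq_zero.1 hdc)
    exact hd (by rwa [hdc, Function.update_eq_self])

theorem TotallyNonneg.det_update_ge_eq_zero (hM : TotallyNonneg M) {p : Fin (k + 1)}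
    {r c : Fin (k + 1) → Fin n} (hD : (M.submatrix (p.removeNth r) (p.removeNth c)).det ≠ 0)
    (h0 : (M.submatrix r c).det = 0) :
    (∀ d, c p ≤ d → (M.submatrix r (Function.update c p d)).det = 0) ∨
      ∀ b, r p ≤ b → (M.submatrix (Function.update r p b) c).det = 0 := by
  by_contra! ⟨⟨d, hd, hd0⟩, ⟨b, hb, hb0⟩⟩
  refine (hM.det_update_eq_zero_or hD h0 (mul_nonneg ?_ ?_)).elim hd0 hb0 <;>
    exact sub_nonneg.2 (by exact_mod_cast ‹_›)

theorem TotallyNonneg.det_update_le_eq_zero (hM : TotallyNonneg M) {p : Fin (k + 1)}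
    {r c : Fin (k + 1) → Fin n} (hD : (M.submatrix (p.removeNth r) (p.removeNth c)).det ≠ 0)
    (h0 : (M.submatrix r c).det = 0) :
    (∀ d, d ≤ c p → (M.submatrix r (Function.update c p d)).det = 0) ∨
      ∀ b, b ≤ r p → (M.submatrix (Function.update r p b) c).det = 0 := by
  by_contra! ⟨⟨d, hd, hd0⟩, ⟨b, hb, hb0⟩⟩
  refine (hM.det_update_eq_zero_or hD h0 (mul_nonneg_of_nonpos_of_nonpos ?_ ?_)).elim hd0 hb0 <;>
    exact sub_nonpos.2 (by exact_mod_cast ‹_›)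

end TotallyNonneg

section CornerMinors

open Matrix

variable {n k j : ℕ} {B M : Matrix (Fin n) (Fin n) ℝ}

/-- The last `j` indices of `Fin n` in increasing order; the first `j` indices are
`Fin.castLE hj`. -/
def topIndices (hj : j ≤ n) : Fin j → Fin n :=
  Fin.cast (Nat.sub_add_cancel hj) ∘ Fin.natAdd (n - j)

theorem strictMono_topIndices (hj : j ≤ n) : StrictMono (topIndices hj) :=
  (Fin.cast_strictMono _).comp (Fin.strictMono_natAdd _)

theorem llMinor_transpose (M : Matrix (Fin n) (Fin n) ℝ) (hj : j ≤ n) :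
    llMinor Mᵀ j hj = urMinor M j hj :=
  det_submatrix_transpose M (Fin.castLE hj) (topIndices hj)

theorem urMinor_self (M : Matrix (Fin n) (Fin n) ℝ) : urMinor M n le_rfl = M.det := by
  simp only [urMinor, tsub_self, zero_add, Fin.eta]
  rfl

theorem val_add_val_zero_le_of_strictMono {r : Fin (k + 1) → Fin n} (hr : StrictMono r)
    (i : Fin (k + 1)) : (i + r 0 : ℕ) ≤ r i := by
  induction i using Fin.induction with
  | zero => simp
  | succ i ih =>
    have hlt := Fin.lt_def.1 (hr i.castSucc_lt_succ)
    simp only [Fin.val_castSucc, Fin.val_succ] at ih ⊢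
    omega

theorem castLE_le_apply_last_of_strictMono (hk : k + 1 ≤ n) {r : Fin (k + 1) → Fin n}
    (hr : StrictMono r) (i : Fin (k + 1)) : Fin.castLE hk i ≤ r (Fin.last k) := by
  have hlast := val_add_val_zero_le_of_strictMono hr (Fin.last k)
  rw [Fin.le_def, Fin.val_castLE]
  rw [Fin.val_last] at hlast
  omega

theorem apply_zero_le_topIndices_of_strictMono (hk : k + 1 ≤ n) {r : Fin (k + 1) → Fin n}
    (hr : StrictMono r) (i : Fin (k + 1)) : r 0 ≤ topIndices hk i := by
  have hlast := val_add_val_zero_le_of_strictMono hr (Fin.last k)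
  change (r 0 : ℕ) ≤ n - (k + 1) + i
  rw [Fin.val_last] at hlast
  omega

theorem le_topIndices_last (hk : k + 1 ≤ n) (d : Fin n) : d ≤ topIndices hk (Fin.last k) := by
  change (d : ℕ) ≤ n - (k + 1) + k
  omega

theorem exists_ge_det_update_castLE_ne_zero (hM : M.det ≠ 0) (hk : k + 1 ≤ n)
    (hD : (M.submatrix ((Fin.last k).removeNth (Fin.castLE hk))
      ((Fin.last k).removeNth (Fin.castLE hk))).det ≠ 0) :
    ∃ d, Fin.castLE hk (Fin.last k) ≤ d ∧
      (M.submatrix (Fin.castLE hk) (Function.update (Fin.castLE hk) (Fin.last k) d)).det ≠ 0 := by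
  obtain ⟨d, hd⟩ := exists_det_update_ne_zero hM (Fin.castLE_injective hk) hD
  refine ⟨d, not_lt.1 fun hlt => ?_, hd⟩
  have hdk : (d : ℕ) < k := hlt
  have hne : (⟨d, by omega⟩ : Fin (k + 1)) ≠ Fin.last k := Fin.ne_of_lt hdk
  refine hne (injective_right_of_det_submatrix_ne_zero hd ?_)
  rw [Function.update_of_ne hne, Function.update_self]
  rfl

theorem TotallyNonneg.det_submatrix_castLE_pos (hM : TotallyNonneg M) (hdet : M.det ≠ 0)
    (hk : k ≤ n) : 0 < (M.submatrix (Fin.castLE hk) (Fin.castLE hk)).det := by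
  induction k with
  | zero => simp
  | succ k ih =>
    have hmono := Fin.strictMono_castLE hk
    have hremove : (Fin.last k).removeNth (Fin.castLE hk) = Fin.castLE (Nat.le_of_succ_le hk) := by
      ext i
      simp [Fin.removeNth]
    have hD : (M.submatrix ((Fin.last k).removeNth (Fin.castLE hk))
        ((Fin.last k).removeNth (Fin.castLE hk))).det ≠ 0 := hremove ▸ (ih _).ne'
    refine (hM _ _ _ hmono hmono).lt_of_ne' fun h0 => ?_
    rcases hM.det_update_ge_eq_zero hD h0 with h | h
    · obtain ⟨d, hd, hd0⟩ := exists_ge_det_update_castLE_ne_zero hdet hk hD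
      exact hd0 (h d hd)
    · obtain ⟨b, hb, hb0⟩ := exists_ge_det_update_castLE_ne_zero (M := Mᵀ)
        (by rwa [det_transpose]) hk (by rwa [det_submatrix_transpose])
      exact hb0 (by rw [det_submatrix_transpose, h b hb])

theorem TotallyNonneg.det_submatrix_topIndices_pos (hM : TotallyNonneg M) (hdet : M.det ≠ 0)
    (hpos : ∀ r c : Fin k → Fin n, StrictMono r → StrictMono c → 0 < (M.submatrix r c).det)
    (hk : k + 1 ≤ n) (hur : urMinor M (k + 1) hk ≠ 0) {r : Fin (k + 1) → Fin n}
    (hr : StrictMono r) : 0 < (M.submatrix r (topIndices hk)).det := by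
  have htop := strictMono_topIndices hk
  have hD : (M.submatrix ((Fin.last k).removeNth r)
      ((Fin.last k).removeNth (topIndices hk))).det ≠ 0 :=
    (hpos _ _ (hr.comp (Fin.strictMono_succAbove _)) (htop.comp (Fin.strictMono_succAbove _))).ne'
  refine (hM _ _ _ hr htop).lt_of_ne' fun h0 => ?_
  rcases hM.det_update_le_eq_zero hD h0 with h | h
  · obtain ⟨d, hd⟩ := exists_det_update_ne_zero hdet hr.injective hD
    exact hd (h d (le_topIndices_last hk d))
  · refine hur ?_
    rw [← llMinor_transpose]
    refine det_submatrix_eq_zero_of_det_update_eq_zero (M := Mᵀ) (p := Fin.last k)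
      (r := topIndices hk) (c := r) (q := Fin.castLE hk) ?_ fun i => ?_
    · rwa [det_submatrix_transpose]
    · rw [det_submatrix_transpose]
      exact h _ (castLE_le_apply_last_of_strictMono hk hr i)

/-- All lower-left corner minors, except possibly the determinant, are positive: the condition on
`A ^ w` whose least solution is `r_ℓ(A)`. -/
def LowerCornersPos (M : Matrix (Fin n) (Fin n) ℝ) : Prop :=
  ∀ (j : ℕ) (hj : j ≤ n), 1 ≤ j → j < n → 0 < llMinor M j hj

/-- All upper-right corner minors, except possibly the determinant, are positive: the condition on
`A ^ v` whose least solution is `r_u(A)`. -/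
def UpperCornersPos (M : Matrix (Fin n) (Fin n) ℝ) : Prop :=
  ∀ (j : ℕ) (hj : j ≤ n), 1 ≤ j → j < n → 0 < urMinor M j hj

theorem lowerCornersPos_transpose : LowerCornersPos Mᵀ ↔ UpperCornersPos M := by
  simp only [LowerCornersPos, UpperCornersPos, llMinor_transpose]

theorem UpperCornersPos.urMinor_ne_zero (hM : UpperCornersPos M) (hdet : M.det ≠ 0)
    (hj : j ≤ n) (hj0 : 1 ≤ j) : urMinor M j hj ≠ 0 := by
  rcases hj.lt_or_eq with hlt | rfl
  · exact (hM j hj hj0 hlt).ne'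
  · rwa [urMinor_self]

theorem TotallyPos.lowerCornersPos (hM : TotallyPos M) : LowerCornersPos M :=
  fun j hj _ _ => hM j _ _ (strictMono_topIndices hj) (Fin.strictMono_castLE hj)

theorem TotallyPos.upperCornersPos (hM : TotallyPos M) : UpperCornersPos M :=
  fun j hj _ _ => hM j _ _ (Fin.strictMono_castLE hj) (strictMono_topIndices hj)

theorem TotallyNonneg.totallyPos_of_cornersPos (hM : TotallyNonneg M) (hdet : M.det ≠ 0)
    (hlower : LowerCornersPos M) (hupper : UpperCornersPos M) : TotallyPos M := by
  intro k
  induction k with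
  | zero => simp
  | succ k ih =>
    intro r c hr hc
    have hk : k + 1 ≤ n := by simpa using Fintype.card_le_of_injective r hr.injective
    have hD : (M.submatrix ((0 : Fin (k + 1)).removeNth r)
        ((0 : Fin (k + 1)).removeNth c)).det ≠ 0 :=
      (ih _ _ (hr.comp (Fin.strictMono_succAbove _)) (hc.comp (Fin.strictMono_succAbove _))).ne'
    refine (hM _ _ _ hr hc).lt_of_ne' fun h0 => ?_
    rcases hM.det_update_ge_eq_zero hD h0 with h | h
    · refine (hM.det_submatrix_topIndices_pos hdet ih hk
        (hupper.urMinor_ne_zero hdet hk (Nat.le_add_left 1 k)) hr).ne' ?_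
      exact det_submatrix_eq_zero_of_det_update_eq_zero hD fun i =>
        h _ (apply_zero_le_topIndices_of_strictMono hk hc i)
    · have hdetT : Mᵀ.det ≠ 0 := by rwa [det_transpose]
      have hupperT : UpperCornersPos Mᵀ := lowerCornersPos_transpose.1 hlower
      refine (hM.transpose_s16.det_submatrix_topIndices_pos hdetT ?_ hk
        (hupperT.urMinor_ne_zero hdetT hk (Nat.le_add_left 1 k)) hc).ne' ?_
      · intro r' c' hr' hc'
        rw [det_submatrix_transpose]
        exact ih c' r' hc' hr'
      · refine det_submatrix_eq_zero_of_det_update_eq_zero (p := 0) (c := r) ?_ fun i => ?_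
        · rwa [det_submatrix_transpose]
        · rw [det_submatrix_transpose]
          exact h _ (apply_zero_le_topIndices_of_strictMono hk hr i)

theorem TotallyNonneg.totallyPos_iff (hM : TotallyNonneg M) (hdet : M.det ≠ 0) :
    TotallyPos M ↔ LowerCornersPos M ∧ UpperCornersPos M :=
  ⟨fun h => ⟨h.lowerCornersPos, h.upperCornersPos⟩,
    fun h => hM.totallyPos_of_cornersPos hdet h.1 h.2⟩

theorem LowerCornersPos.mul_s16 (hlower : LowerCornersPos M) (hM : TotallyNonneg M)
    (hB : TotallyNonneg B) (hdet : B.det ≠ 0) : LowerCornersPos (M * B) := fun j hj hj0 hjn =>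
  have hle := hM.det_mul_det_le hB (strictMono_topIndices hj) (Fin.strictMono_castLE hj)
    (Fin.castLE hj)
  pos_of_mul_pos_right
    ((mul_pos (hlower j hj hj0 hjn) (hB.det_submatrix_castLE_pos hdet hj)).trans_le hle)
    (Nat.cast_nonneg _)

theorem LowerCornersPos.pow_of_le {A : Matrix (Fin n) (Fin n) ℝ} {w m : ℕ}
    (hlower : LowerCornersPos (A ^ w)) (hA : TotallyNonneg A) (hdet : A.det ≠ 0)
    (hw : 0 < w) (hwm : w ≤ m) : LowerCornersPos (A ^ m) := by
  induction m, hwm using Nat.le_induction with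
  | base => exact hlower
  | succ m hwm ih => exact pow_succ A m ▸ ih.mul_s16 (hA.pow (hw.trans_le hwm)) hA hdet

theorem UpperCornersPos.pow_of_le {A : Matrix (Fin n) (Fin n) ℝ} {v m : ℕ}
    (hupper : UpperCornersPos (A ^ v)) (hA : TotallyNonneg A) (hdet : A.det ≠ 0)
    (hv : 0 < v) (hvm : v ≤ m) : UpperCornersPos (A ^ m) := by
  rw [← lowerCornersPos_transpose, transpose_pow] at hupper ⊢
  exact hupper.pow_of_le hA.transpose_s16 (by rwa [det_transpose]) hv hvm

theorem TotallyPos.det_pos (hM : TotallyPos M) : 0 < M.det := by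
  simpa using hM n id id strictMono_id strictMono_id

end CornerMinors

/-- For an oscillatory A, the exponent r(A) equals max{r_ℓ(A), r_u(A)}, where r_ℓ(A)
[r_u(A)] is the least positive power making all lower-left [upper-right] corner minors,
except possibly the determinant, positive. -/
theorem stmt16 {n : ℕ} (A : Matrix (Fin n) (Fin n) ℝ)
    (hTN : TotallyNonneg A) (hosc : ∃ k : ℕ, 0 < k ∧ TotallyPos (A ^ k))
    (w v r : ℕ)
    (hw : IsLeast {w : ℕ | 0 < w ∧
        ∀ (j : ℕ) (hj : j ≤ n), 1 ≤ j → j < n → 0 < llMinor (A ^ w) j hj} w)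
    (hv : IsLeast {v : ℕ | 0 < v ∧
        ∀ (j : ℕ) (hj : j ≤ n), 1 ≤ j → j < n → 0 < urMinor (A ^ v) j hj} v)
    (hr : IsLeast {r : ℕ | 0 < r ∧ TotallyPos (A ^ r)} r) :
    r = max w v := by
  obtain ⟨k, hk, hTP⟩ := hosc
  have hdet : A.det ≠ 0 := by
    have h := hTP.det_pos.ne'
    rwa [Matrix.det_pow, pow_ne_zero_iff hk.ne'] at h
  have hiff {m : ℕ} (hm : 0 < m) :
      TotallyPos (A ^ m) ↔ LowerCornersPos (A ^ m) ∧ UpperCornersPos (A ^ m) :=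
    (hTN.pow hm).totallyPos_iff (by rw [Matrix.det_pow]; exact pow_ne_zero m hdet)
  obtain ⟨⟨hw0, hlower⟩, hwmin⟩ := hw
  obtain ⟨⟨hv0, hupper⟩, hvmin⟩ := hv
  refine hr.unique ⟨⟨lt_max_of_lt_left hw0, (hiff (lt_max_of_lt_left hw0)).2 ⟨?_, ?_⟩⟩, ?_⟩
  · exact LowerCornersPos.pow_of_le hlower hTN hdet hw0 (le_max_left w v)
  · exact UpperCornersPos.pow_of_le hupper hTN hdet hv0 (le_max_right w v)
  · rintro m ⟨hm, hmTP⟩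
    exact max_le (hwmin ⟨hm, hmTP.lowerCornersPos⟩) (hvmin ⟨hm, hmTP.upperCornersPos⟩)
end
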